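/- For every t₀ ∈ ℕ, every cylinder B = [b]_{-n}^{n} and every ε > 0 there exists τ = τ(B,t₀,ε) ∈ ℕ such that P( ∪_{l=1}^{m_τ/N_τ} ( B ∩ T^{-lN_τ}B ∩ {w : |(T^{lN_τ})'(w) − λ_{t₀}| ≤ ε} ) ) ≥ 0.9 · P(B). -/

import Mathlib

open MeasureTheory Filter Topology

noncomputable section

/-- The sequence space `{0,1}^ℤ`, with `true` playing the role of `1`. -/
abbrev Xspace := ℤ → Bool

/-- The left shift `(Tw)_i = w_{i+1}`. -/
def shiftT (w : Xspace) : Xspace := fun i => w (i + 1)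

/-- The inverse of the left shift, so that `P ∘ T = Measure.map shiftInv P`. -/
def shiftInv (w : Xspace) : Xspace := fun i => w (i - 1)

/-- `coordWt p b` is `P_k({b})` when `P_k({0}) = p`. -/
def coordWt (p : ℝ) (b : Bool) : ℝ := if b then 1 - p else p

/-- The set `A_t = {∏_{u=1}^t λ_u^{x_u} : x_u ∈ ℤ, |x_u| ≤ n_u}`. -/
def Aset (lam : ℕ → ℝ) (nn : ℕ → ℕ) (t : ℕ) : Set ℝ :=
  {x | ∃ c : ℕ → ℤ, (∀ u, |c u| ≤ (nn u : ℤ)) ∧ x = ∏ u ∈ Finset.Icc 1 t, lam u ^ c u}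

/-- The data of Kosloff's inductive construction: a summable sequence `ε_t > 0`,
`M_0 = 1`, `λ_t = exp(2^{-k_t})` with `k_t = ⌊log₂(M_{t-1}/ε_t)⌋ + 1`,
`n_t` a positive integer satisfying Property *, `N_t = M_{t-1} + n_t`,
`m_t = N_t (2 + 2^{3N_t})`, `M_t = N_t + m_t`. -/
structure KosloffData where
  eps : ℕ → ℝ
  lam : ℕ → ℝ
  nn : ℕ → ℕ
  M : ℕ → ℕ
  N : ℕ → ℕ
  m : ℕ → ℕ
  eps_pos : ∀ t, 1 ≤ t → 0 < eps t
  eps_summable : Summable eps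
  M_zero : M 0 = 1
  lam_def : ∀ t, 1 ≤ t →
    lam t = Real.exp ((2 : ℝ) ^ (-(⌊Real.logb 2 ((M (t - 1) : ℝ) / eps t)⌋ + 1)))
  nn_pos : ∀ t, 1 ≤ t → 0 < nn t
  prop_star : ∀ t, 1 ≤ t → ∀ a ∈ Aset lam nn (t - 1), a ^ 2 ≤ lam t ^ ((nn t : ℝ) / 4)
  N_def : ∀ t, 1 ≤ t → N t = M (t - 1) + nn t
  m_def : ∀ t, 1 ≤ t → m t = N t * (2 + 2 ^ (3 * N t))
  M_def : ∀ t, 1 ≤ t → M t = N t + m t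

/-- `P` is the product measure `∏_k P_k` of Kosloff's construction, where `p k = P_k({0})`:
`p k = 1/2` for `k ≥ 0`, `p k = 1/(1+λ_t)` for `-N_t < k ≤ -M_{t-1}`, and `p k = 1/2`
for `-M_t < k ≤ -N_t`; cylinders get product mass. -/
def IsKosloffMeasure (D : KosloffData) (p : ℤ → ℝ) (P : Measure Xspace) : Prop :=
  IsProbabilityMeasure P ∧
  (∀ k : ℤ, 0 ≤ k → p k = 1 / 2) ∧
  (∀ t : ℕ, 1 ≤ t → ∀ k : ℤ, -(D.N t : ℤ) < k → k ≤ -(D.M (t - 1) : ℤ) →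
      p k = 1 / (1 + D.lam t)) ∧
  (∀ t : ℕ, 1 ≤ t → ∀ k : ℤ, -(D.M t : ℤ) < k → k ≤ -(D.N t : ℤ) → p k = 1 / 2) ∧
  (∀ k l : ℤ, ∀ b : ℤ → Bool,
    P {w : Xspace | ∀ i ∈ Finset.Icc k l, w i = b i}
      = ∏ i ∈ Finset.Icc k l, ENNReal.ofReal (coordWt (p i) (b i)))

/-- The Radon–Nikodym derivative `(Tⁿ)' = d(P∘Tⁿ)/dP`. -/
def rnD (P : Measure Xspace) (n : ℕ) : Xspace → ENNReal :=
  Measure.rnDeriv (Measure.map (shiftInv^[n]) P) P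

/-- `T` is nonsingular: `P∘T` and `P` are mutually absolutely continuous. -/
def ShiftNonsingular (P : Measure Xspace) : Prop :=
  Measure.map shiftInv P ≪ P ∧ P ≪ Measure.map shiftInv P

/-- The ratio set `R(T,P)` of the shift. -/
def ratioSet (P : Measure Xspace) : Set ℝ :=
  {a | 0 ≤ a ∧ ∀ A : Set Xspace, MeasurableSet A → 0 < P A → ∀ ε : ℝ, 0 < ε → ∃ n : ℕ,
      0 < P (A ∩ shiftT^[n] ⁻¹' A ∩ {w | |(rnD P n w).toReal - a| ≤ ε})}

/-- `t(n) = min {t ≥ 1 : n < N_t}`. -/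
def tOf (D : KosloffData) (n : ℕ) : ℕ := sInf {t : ℕ | 1 ≤ t ∧ n < D.N t}

/-- `Υ_u(w) = ∑_{k=-N_u+1}^{-M_{u-1}} w_k`. -/
def Ups (D : KosloffData) (u : ℕ) (w : Xspace) : ℤ :=
  ∑ k ∈ Finset.Icc (-(D.N u : ℤ) + 1) (-(D.M (u - 1) : ℤ)), (if w k then 1 else 0)

/-- `f_t(w) = ∏_{u=1}^t λ_u^{Υ_u(w)}`. -/
def fT (D : KosloffData) (t : ℕ) (w : Xspace) : ℝ :=
  ∏ u ∈ Finset.Icc 1 t, D.lam u ^ Ups D u w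

/-- The ratio `P_{k-n}({w_k}) / P_k({w_k})`. -/
def rr (p : ℤ → ℝ) (n : ℕ) (w : Xspace) (k : ℤ) : ℝ :=
  coordWt (p (k - n)) (w k) / coordWt (p k) (w k)

/-- A general product measure on `{0,1}^ℤ` with `q k = P_k({1})`. -/
def IsProductMeasure (q : ℤ → ℝ) (P : Measure Xspace) : Prop :=
  IsProbabilityMeasure P ∧
  ∀ k l : ℤ, ∀ b : ℤ → Bool,
    P {w : Xspace | ∀ i ∈ Finset.Icc k l, w i = b i}
      = ∏ i ∈ Finset.Icc k l, ENNReal.ofReal (if b i then q i else 1 - q i)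

/-!
`P` is a product of coins whose log-odds vanish outside the biased blocks, where they equal
`log λ_t`. These numbers are powers of two, so for `τ` large `log λ_{t₀} = K log λ_τ` with `K` an
integer, and by Property * the `τ`-th biased block has length at least `8K`. Since `λ_τ` is close to
`1`, Hoeffding's inequality produces at least `K` zeros in that block with probability at least
`19/20`, independently of the cylinder.

Shifting by `l N_τ ≤ m_τ` moves the coordinates `-N_τ < k < 0` to fair coordinates, so up to the
later blocks the derivative at `w` is `∏ λ_u ^ (Υ_u(T^{l N_τ} w) - Υ_u(w))` over `u ≤ τ`. The later
blocks contribute a factor within `exp (± 2 ∑_{t > τ} ε_t)`: a shift by at most `M_τ` alters each of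
them at no more than `2 M_τ` coordinates, and `M_{t-1} log λ_t ≤ ε_t`.

Hence it suffices that `T^{l N_τ} w` shows, near the origin, the word of `w` with `K` zeros of the
`τ`-th biased block raised to ones: it is again in the cylinder and the derivative is close to
`λ_τ ^ K = λ_{t₀}`. Windows of length `2 N_τ` at positive multiples of `2 N_τ` are independent and
fair, so among `2 ^ (3 N_τ - 1)` of them the prescribed word is missed with probability at most
`1/20`.
-/

section Measure

open scoped symmDiff ENNReal

variable {α : Type*} [MeasurableSpace α] {μ ν : Measure α}

theorem measure_le_of_forall_mem_isSetRing [IsFiniteMeasure μ] [IsFiniteMeasure ν]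
    {C : Set (Set α)} (hC : IsSetRing C) (hgen : ‹MeasurableSpace α› = .generateFrom C)
    (huniv : Set.univ ∈ C) (h : ∀ s ∈ C, μ s ≤ ν s) : μ ≤ ν := by
  refine Measure.le_intro fun s hs _ => ENNReal.le_of_forall_pos_le_add fun ε hε _ => ?_
  have hcover : ∃ D : Set (Set α), D.Countable ∧ D ⊆ C ∧ (μ + ν) (⋃₀ D)ᶜ = 0 :=
    ⟨{Set.univ}, Set.countable_singleton _, by simpa using huniv, by simp⟩
  obtain ⟨t, htC, ht⟩ := exists_measure_symmDiff_lt_of_generateFrom_isSetRing hC hcover hgen hs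
    (ε := (ε : ℝ≥0∞)) (by exact_mod_cast hε)
  have hs_sub : s ⊆ t ∪ s \ t := by rw [Set.union_sdiff_self]; exact Set.subset_union_right
  have ht_sub : t ⊆ s ∪ t \ s := by rw [Set.union_sdiff_self]; exact Set.subset_union_right
  have hdiff : μ (s \ t) + ν (t \ s) ≤ ε :=
    calc μ (s \ t) + ν (t \ s) ≤ μ (t ∆ s) + ν (t ∆ s) := by
          gcongr
          · exact Set.subset_union_right
          · exact Set.subset_union_left
      _ ≤ ε := ht.le
  calc μ s ≤ μ t + μ (s \ t) := (measure_mono hs_sub).trans (measure_union_le _ _)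
    _ ≤ ν s + ν (t \ s) + μ (s \ t) := by
        gcongr
        exact (h t htC).trans ((measure_mono ht_sub).trans (measure_union_le _ _))
    _ = ν s + (μ (s \ t) + ν (t \ s)) := by rw [add_assoc, add_comm (ν (t \ s))]
    _ ≤ ν s + ε := by gcongr

theorem ae_le_of_withDensity_le [SigmaFinite μ] {f g : α → ℝ≥0∞} (hf : Measurable f)
    (h : μ.withDensity f ≤ μ.withDensity g) : f ≤ᵐ[μ] g := by
  refine ae_le_of_forall_setLIntegral_le_of_sigmaFinite hf fun s hs _ => ?_
  simpa only [withDensity_apply _ hs] using h s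

theorem eq_withDensity_singleton_div [Countable α] [MeasurableSingletonClass α]
    [IsFiniteMeasure ν] (hν : ∀ a, ν {a} ≠ 0) :
    μ = ν.withDensity fun a => μ {a} / ν {a} := by
  refine Measure.ext_of_singleton fun a => ?_
  rw [withDensity_apply _ (measurableSet_singleton a), lintegral_singleton,
    ENNReal.div_mul_cancel (hν a) (measure_ne_top ν _)]

variable {ι : Type*} {X : ι → Type*} [∀ i, MeasurableSpace (X i)]

theorem exists_eq_cylinder_of_mem_measurableCylinders (F : Finset ι)
    {s : Set (∀ i, X i)} (hs : s ∈ measurableCylinders X) :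
    ∃ J, F ⊆ J ∧ ∃ S : Set (∀ i : J, X i), MeasurableSet S ∧ s = cylinder J S := by
  classical
  obtain ⟨J, S, hS, rfl⟩ := (mem_measurableCylinders s).1 hs
  exact ⟨J ∪ F, Finset.subset_union_right, _,
    (Finset.measurable_restrict₂ Finset.subset_union_left) hS, cylinder_eq_cylinder_union J S F⟩

theorem eq_infinitePi_of_cofinal {ν : ∀ i, Measure (X i)} [∀ i, IsProbabilityMeasure (ν i)]
    {μ : Measure (∀ i, X i)} (h : ∀ F : Finset ι, ∃ J, F ⊆ J ∧
      μ.map J.restrict = Measure.pi fun i : J => ν i) :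
    μ = Measure.infinitePi ν := by
  refine IsProjectiveLimit.unique (fun F => ?_) (Measure.isProjectiveLimit_infinitePi ν)
  obtain ⟨J, hFJ, hJ⟩ := h F
  rw [← Finset.restrict₂_comp_restrict hFJ,
    ← Measure.map_map (Finset.measurable_restrict₂ hFJ) (Finset.measurable_restrict J), hJ,
    ← Measure.infinitePi_map_restrict, Measure.map_map (Finset.measurable_restrict₂ hFJ)
    (Finset.measurable_restrict J), Finset.restrict₂_comp_restrict,
    Measure.infinitePi_map_restrict]

variable {ν : ∀ i, Measure (X i)} {ρ : ∀ i, X i → ℝ≥0∞} [∀ i, IsProbabilityMeasure (ν i)]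

theorem pi_withDensity [Fintype ι] [∀ i, SigmaFinite ((ν i).withDensity (ρ i))]
    (hρ : ∀ i, Measurable (ρ i)) :
    Measure.pi (fun i => (ν i).withDensity (ρ i)) =
      (Measure.pi ν).withDensity fun x => ∏ i, ρ i (x i) := by
  refine Measure.pi_eq fun s hs => ?_
  have hind : ∀ x : ∀ i, X i, (Set.univ.pi s).indicator (fun x => ∏ i, ρ i (x i)) x =
      ∏ i, (s i).indicator (ρ i) (x i) := fun x => by
    by_cases hx : x ∈ Set.univ.pi s
    · rw [Set.indicator_of_mem hx]
      exact Finset.prod_congr rfl fun i _ => (Set.indicator_of_mem (hx i (Set.mem_univ i)) _).symm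
    · obtain ⟨i, hi⟩ : ∃ i, x i ∉ s i := by simpa using hx
      rw [Set.indicator_of_notMem hx]
      exact (Finset.prod_eq_zero (Finset.mem_univ i) (Set.indicator_of_notMem hi _)).symm
  have hmeas : ∀ i, Measurable ((s i).indicator (ρ i)) := fun i => (hρ i).indicator (hs i)
  have hindep : ProbabilityTheory.iIndepFun
      (fun i (x : ∀ i, X i) => (s i).indicator (ρ i) (x i)) (Measure.pi ν) := by
    rw [← Measure.infinitePi_eq_pi]
    exact ProbabilityTheory.iIndepFun_infinitePi hmeas
  rw [withDensity_apply _ (.univ_pi hs), ← lintegral_indicator (.univ_pi hs),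
    lintegral_congr hind, ProbabilityTheory.lintegral_prod_eq_prod_lintegral_of_indepFun _ _ hindep
      fun i => (hmeas i).comp (measurable_pi_apply i)]
  refine Finset.prod_congr rfl fun i _ => ?_
  rw [(measurePreserving_eval ν i).lintegral_comp (hmeas i), lintegral_indicator (hs i),
    withDensity_apply _ (hs i)]

variable [∀ i, IsProbabilityMeasure ((ν i).withDensity (ρ i))]

theorem infinitePi_withDensity_cylinder (hρ : ∀ i, Measurable (ρ i)) {J : Finset ι}
    {S : Set (∀ i : J, X i)} (hS : MeasurableSet S) :
    Measure.infinitePi (fun i => (ν i).withDensity (ρ i)) (cylinder J S) =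
      (Measure.infinitePi ν).withDensity (fun x => ∏ i ∈ J, ρ i (x i)) (cylinder J S) := by
  have hmeas : Measurable fun x : ∀ i : J, X i => ∏ i : J, ρ i (x i) := by fun_prop
  rw [Measure.infinitePi_cylinder _ hS, pi_withDensity fun i : J => hρ i,
    withDensity_apply _ hS, withDensity_apply _ (hS.cylinder J), ← Measure.infinitePi_map_restrict,
    setLIntegral_map hS hmeas (Finset.measurable_restrict J)]
  refine lintegral_congr fun x => ?_
  exact Finset.prod_coe_sort J fun i => ρ i (x i)

theorem lintegral_prod_density_eq_one (hρ : ∀ i, Measurable (ρ i)) (J : Finset ι) :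
    ∫⁻ x, ∏ i ∈ J, ρ i (x i) ∂Measure.infinitePi ν = 1 := by
  have h := infinitePi_withDensity_cylinder (ν := ν) hρ (J := J) .univ
  rwa [cylinder_univ, measure_univ, withDensity_apply _ .univ, setLIntegral_univ, eq_comm] at h

theorem isFiniteMeasure_infinitePi_withDensity_const_mul_prod (hρ : ∀ i, Measurable (ρ i))
    {c : ℝ≥0∞} (hc : c ≠ ∞) (J : Finset ι) :
    IsFiniteMeasure ((Measure.infinitePi ν).withDensity fun x => c * ∏ i ∈ J, ρ i (x i)) := by
  refine isFiniteMeasure_withDensity ?_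
  rwa [lintegral_const_mul' _ _ hc, lintegral_prod_density_eq_one hρ J, mul_one]

variable {F : Finset ι}

theorem infinitePi_withDensity_le (hρ : ∀ i, Measurable (ρ i)) {C : ℝ≥0∞} (hC : C ≠ ∞)
    (h : ∀ J : Finset ι, Disjoint J F → ∀ x : ∀ i, X i, ∏ i ∈ J, ρ i (x i) ≤ C) :
    Measure.infinitePi (fun i => (ν i).withDensity (ρ i)) ≤
      (Measure.infinitePi ν).withDensity fun x => C * ∏ i ∈ F, ρ i (x i) := by
  classical
  have := isFiniteMeasure_infinitePi_withDensity_const_mul_prod (ν := ν) hρ hC F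
  refine measure_le_of_forall_mem_isSetRing isSetRing_measurableCylinders
    generateFrom_measurableCylinders.symm (univ_mem_measurableCylinders X) fun s hs => ?_
  obtain ⟨J, hFJ, S, hS, rfl⟩ := exists_eq_cylinder_of_mem_measurableCylinders F hs
  rw [infinitePi_withDensity_cylinder hρ hS]
  refine withDensity_mono (ae_of_all _ fun x => ?_) _
  calc ∏ i ∈ J, ρ i (x i) = (∏ i ∈ J \ F, ρ i (x i)) * ∏ i ∈ F, ρ i (x i) :=
        (Finset.prod_sdiff hFJ).symm
    _ ≤ C * ∏ i ∈ F, ρ i (x i) := by gcongr; exact h _ Finset.sdiff_disjoint x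

theorem le_infinitePi_withDensity (hρ : ∀ i, Measurable (ρ i)) {c : ℝ≥0∞} (hc : c ≠ ∞)
    (h : ∀ J : Finset ι, Disjoint J F → ∀ x : ∀ i, X i, c ≤ ∏ i ∈ J, ρ i (x i)) :
    (Measure.infinitePi ν).withDensity (fun x => c * ∏ i ∈ F, ρ i (x i)) ≤
      Measure.infinitePi (fun i => (ν i).withDensity (ρ i)) := by
  classical
  have := isFiniteMeasure_infinitePi_withDensity_const_mul_prod (ν := ν) hρ hc F
  refine measure_le_of_forall_mem_isSetRing isSetRing_measurableCylinders
    generateFrom_measurableCylinders.symm (univ_mem_measurableCylinders X) fun s hs => ?_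
  obtain ⟨J, hFJ, S, hS, rfl⟩ := exists_eq_cylinder_of_mem_measurableCylinders F hs
  rw [infinitePi_withDensity_cylinder hρ hS]
  refine withDensity_mono (ae_of_all _ fun x => ?_) _
  calc c * ∏ i ∈ F, ρ i (x i) ≤ (∏ i ∈ J \ F, ρ i (x i)) * ∏ i ∈ F, ρ i (x i) := by
        gcongr; exact h _ Finset.sdiff_disjoint x
    _ = ∏ i ∈ J, ρ i (x i) := Finset.prod_sdiff hFJ

theorem rnDeriv_infinitePi_withDensity_le (hρ : ∀ i, Measurable (ρ i)) {C : ℝ≥0∞} (hC : C ≠ ∞)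
    (h : ∀ J : Finset ι, Disjoint J F → ∀ x : ∀ i, X i, ∏ i ∈ J, ρ i (x i) ≤ C) :
    (Measure.infinitePi fun i => (ν i).withDensity (ρ i)).rnDeriv (Measure.infinitePi ν)
      ≤ᵐ[Measure.infinitePi ν] fun x => C * ∏ i ∈ F, ρ i (x i) :=
  ae_le_of_withDensity_le (Measure.measurable_rnDeriv _ _)
    ((Measure.withDensity_rnDeriv_le _ _).trans (infinitePi_withDensity_le hρ hC h))

theorem le_rnDeriv_infinitePi_withDensity (hρ : ∀ i, Measurable (ρ i)) {c C : ℝ≥0∞} (hC : C ≠ ∞)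
    (h : ∀ J : Finset ι, Disjoint J F → ∀ x : ∀ i, X i,
      c ≤ ∏ i ∈ J, ρ i (x i) ∧ ∏ i ∈ J, ρ i (x i) ≤ C) :
    (fun x => c * ∏ i ∈ F, ρ i (x i)) ≤ᵐ[Measure.infinitePi ν]
      (Measure.infinitePi fun i => (ν i).withDensity (ρ i)).rnDeriv (Measure.infinitePi ν) := by
  have hac : Measure.infinitePi (fun i => (ν i).withDensity (ρ i)) ≪ Measure.infinitePi ν :=
    (Measure.absolutelyContinuous_of_le
      (infinitePi_withDensity_le hρ hC fun J hJ x => (h J hJ x).2)).trans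
      (withDensity_absolutelyContinuous _ _)
  have hc : c ≠ ∞ := by
    obtain ⟨x⟩ := (Measure.infinitePi ν).nonempty_of_neZero
    exact ne_top_of_le_ne_top hC ((h ∅ (Finset.disjoint_empty_left F) x).1.trans
      (h ∅ (Finset.disjoint_empty_left F) x).2)
  refine ae_le_of_withDensity_le (by fun_prop) ?_
  rw [Measure.withDensity_rnDeriv_eq _ _ hac]
  exact le_infinitePi_withDensity hρ hc fun J hJ x => (h J hJ x).1

end Measure

section Probability

open ProbabilityTheory

variable {Ω : Type*} [MeasurableSpace Ω] {P : Measure Ω} {ι : Type*}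

theorem measureReal_inter_iInter_preimage_compl_singleton_le {α : Type*} [MeasurableSpace α]
    [MeasurableSingletonClass α] {X : ι → Ω → α} (hX : iIndepFun X P)
    (hmeas : ∀ i, Measurable (X i)) {i₀ : ι} {s : Finset ι} (hi₀ : i₀ ∉ s) {a a' : α} {q : ℝ}
    (hq : ∀ i ∈ s, q ≤ P.real (X i ⁻¹' {a'})) :
    P.real (X i₀ ⁻¹' {a} ∩ ⋂ i ∈ s, X i ⁻¹' {a'}ᶜ) ≤
      (1 - q) ^ s.card * P.real (X i₀ ⁻¹' {a}) := by
  classical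
  have := hX.isProbabilityMeasure
  let E : ι → Set α := fun i => if i = i₀ then {a} else {a'}ᶜ
  have hEi₀ : E i₀ = {a} := if_pos rfl
  have hEs : ∀ i ∈ s, E i = {a'}ᶜ := fun i hi => if_neg (ne_of_mem_of_not_mem hi hi₀)
  have hEmeas : ∀ i, MeasurableSet (E i) := fun i =>
    MeasurableSet.ite' (fun _ => measurableSet_singleton a)
      fun _ => (measurableSet_singleton a').compl
  have hmiss : ∀ i ∈ s, P.real (X i ⁻¹' E i) ≤ 1 - q := fun i hi => by
    rw [hEs i hi, Set.preimage_compl,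
      probReal_compl_eq_one_sub (hmeas i (measurableSet_singleton a'))]
    exact sub_le_sub_left (hq i hi) 1
  have hsplit : X i₀ ⁻¹' {a} ∩ ⋂ i ∈ s, X i ⁻¹' {a'}ᶜ = ⋂ i ∈ insert i₀ s, X i ⁻¹' E i := by
    rw [Finset.set_biInter_insert, hEi₀]
    exact congrArg _ (Set.iInter₂_congr fun i hi => by rw [hEs i hi])
  calc P.real (X i₀ ⁻¹' {a} ∩ ⋂ i ∈ s, X i ⁻¹' {a'}ᶜ)
      = (∏ i ∈ s, P.real (X i ⁻¹' E i)) * P.real (X i₀ ⁻¹' {a}) := by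
        rw [hsplit, measureReal_def, hX.measure_inter_preimage_eq_mul _ fun i _ => hEmeas i,
          ENNReal.toReal_prod, Finset.prod_insert hi₀, hEi₀, mul_comm]
        rfl
    _ ≤ (1 - q) ^ s.card * P.real (X i₀ ⁻¹' {a}) := by
        gcongr
        exact (Finset.prod_le_prod (fun _ _ => measureReal_nonneg) hmiss).trans_eq
          (Finset.prod_const _)

theorem one_sub_pow_mul_measureReal_le_measureReal_exists_rel {α : Type*} [MeasurableSpace α]
    [MeasurableSingletonClass α] [Finite α] {X : ι → Ω → α} (hX : iIndepFun X P)
    (hmeas : ∀ i, Measurable (X i)) {i₀ : ι} {s : Finset ι} (hi₀ : i₀ ∉ s) {q : ℝ}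
    (hq : ∀ i ∈ s, ∀ a, q ≤ P.real (X i ⁻¹' {a})) {A : Set α} {R : α → α → Prop}
    (hR : ∀ a ∈ A, ∃ a', R a a') :
    (1 - (1 - q) ^ s.card) * P.real (X i₀ ⁻¹' A) ≤
      P.real {ω | ∃ i ∈ s, R (X i₀ ω) (X i ω)} := by
  classical
  have := hX.isProbabilityMeasure
  set E := {ω | ∃ i ∈ s, R (X i₀ ω) (X i ω)}
  have hfiber : ∀ a, MeasurableSet (X i₀ ⁻¹' {a}) := fun a => hmeas i₀ (measurableSet_singleton a)
  have hvalue : ∀ a ∈ A, (1 - (1 - q) ^ s.card) * P.real (X i₀ ⁻¹' {a}) ≤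
      (P.restrict E).real (X i₀ ⁻¹' {a}) := fun a ha => by
    obtain ⟨a', haa'⟩ := hR a ha
    have hcover : X i₀ ⁻¹' {a} ⊆
        (X i₀ ⁻¹' {a} ∩ E) ∪ (X i₀ ⁻¹' {a} ∩ ⋂ i ∈ s, X i ⁻¹' {a'}ᶜ) := by
      rintro ω (rfl : X i₀ ω = a)
      by_cases h : ∃ i ∈ s, X i ω = a'
      · obtain ⟨i, hi, rfl⟩ := h
        exact .inl ⟨rfl, i, hi, haa'⟩
      · push Not at h
        exact .inr ⟨rfl, Set.mem_iInter₂.2 h⟩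
    rw [measureReal_restrict_apply (hfiber a)]
    linarith [(measureReal_mono hcover (μ := P)).trans (measureReal_union_le _ _),
      measureReal_inter_iInter_preimage_compl_singleton_le hX hmeas hi₀ (a := a)
        fun i hi => hq i hi a']
  calc (1 - (1 - q) ^ s.card) * P.real (X i₀ ⁻¹' A)
      = ∑ a ∈ A.toFinite.toFinset, (1 - (1 - q) ^ s.card) * P.real (X i₀ ⁻¹' {a}) := by
        rw [← Finset.mul_sum, sum_measureReal_preimage_singleton _ fun a _ => hfiber a,
          Set.Finite.coe_toFinset]
    _ ≤ ∑ a ∈ A.toFinite.toFinset, (P.restrict E).real (X i₀ ⁻¹' {a}) :=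
        Finset.sum_le_sum fun a ha => hvalue a (A.toFinite.mem_toFinset.1 ha)
    _ = (P.restrict E).real (X i₀ ⁻¹' A) := by
        rw [sum_measureReal_preimage_singleton _ fun a _ => hfiber a, Set.Finite.coe_toFinset]
    _ ≤ P.real E := by
        rw [← measureReal_restrict_apply_univ E]
        exact measureReal_mono (Set.subset_univ _)

theorem measureReal_sum_le_le_exp {X : ι → Ω → ℝ} (hX : iIndepFun X P)
    (hmeas : ∀ i, Measurable (X i)) {s : Finset ι} (hX01 : ∀ i ∈ s, ∀ ω, X i ω ∈ Set.Icc 0 1)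
    {m r : ℝ} (hm : ∀ i ∈ s, m ≤ P[X i]) (hr : 0 ≤ r) :
    P.real {ω | ∑ i ∈ s, X i ω ≤ (m - r) * s.card} ≤ Real.exp (-2 * r ^ 2 * s.card) := by
  have := hX.isProbabilityMeasure
  have hindep : iIndepFun (fun i ω => -(X i ω - P[X i])) P :=
    hX.comp (fun i (x : ℝ) => -(x - ∫ ω, X i ω ∂P)) fun i => by fun_prop
  have hsubG : ∀ i ∈ s, HasSubgaussianMGF (fun ω => -(X i ω - P[X i]))
      ((‖(1 : ℝ) - 0‖₊ / 2) ^ 2) P := fun i hi =>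
    (hasSubgaussianMGF_of_mem_Icc (hmeas i).aemeasurable (ae_of_all _ (hX01 i hi))).neg
  have hsub : {ω | ∑ i ∈ s, X i ω ≤ (m - r) * s.card} ⊆
      {ω | r * s.card ≤ ∑ i ∈ s, -(X i ω - P[X i])} := fun ω hω => by
    have hmean : m * s.card ≤ ∑ i ∈ s, P[X i] := by
      simpa [mul_comm] using Finset.card_nsmul_le_sum s _ m hm
    simp only [Set.mem_ofPred_eq, Finset.sum_neg_distrib, Finset.sum_sub_distrib] at hω ⊢
    linarith
  calc P.real {ω | ∑ i ∈ s, X i ω ≤ (m - r) * s.card}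
      ≤ P.real {ω | r * s.card ≤ ∑ i ∈ s, -(X i ω - P[X i])} := measureReal_mono hsub
    _ ≤ _ := HasSubgaussianMGF.measure_sum_ge_le_of_iIndepFun hindep hsubG (by positivity)
    _ = Real.exp (-2 * r ^ 2 * s.card) := by
        rcases s.eq_empty_or_nonempty with rfl | hs
        · simp
        · have : (s.card : ℝ) ≠ 0 := by exact_mod_cast hs.card_ne_zero
          congr 1
          simp only [sub_zero, nnnorm_one, one_div, inv_pow, Finset.sum_const, nsmul_eq_mul,
            NNReal.coe_mul, NNReal.coe_natCast, NNReal.coe_inv, NNReal.coe_pow, NNReal.coe_ofNat,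
            neg_mul]
          field_simp

end Probability

section Coin

open ProbabilityTheory Real

theorem sigmoid_le_exp_abs_sub_mul (s t : ℝ) : sigmoid s ≤ exp |s - t| * sigmoid t := by
  have hone : 1 ≤ exp |s - t| := one_le_exp (abs_nonneg _)
  have hexp : exp (-t) ≤ exp |s - t| * exp (-s) := by
    rw [← exp_add, exp_le_exp]
    linarith [le_abs_self (s - t)]
  rw [sigmoid_def, sigmoid_def, ← div_eq_mul_inv, ← one_div,
    div_le_div_iff₀ (by positivity) (by positivity)]
  linarith

/-- The law of a coin with log-odds `s`, that is with `ℙ(true) = exp s / (1 + exp s)`. In this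
parametrization the ratio of two such laws is controlled by the difference of their log-odds. -/
def coin (s : ℝ) : Measure Bool := bernoulliMeasure true false (unitInterval.sigmoid s)

instance (s : ℝ) : IsProbabilityMeasure (coin s) :=
  inferInstanceAs (IsProbabilityMeasure (bernoulliMeasure _ _ _))

theorem coin_real_true (s : ℝ) : (coin s).real {true} = sigmoid s :=
  bernoulliMeasure_real_apply_of_mem_of_notMem _ (measurableSet_singleton _) rfl (by simp)

theorem coin_real_false (s : ℝ) : (coin s).real {false} = sigmoid (-s) := by
  rw [sigmoid_neg]
  exact bernoulliMeasure_real_apply_of_notMem_of_mem _ (measurableSet_singleton _) (by simp) rfl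

theorem coin_real_singleton (s : ℝ) (b : Bool) :
    (coin s).real {b} = exp (s * b.toNat) * sigmoid (-s) := by
  cases b
  · simp [coin_real_false]
  · rw [coin_real_true, ← sigmoid_mul_rexp_neg, mul_left_comm, ← exp_add]
    simp

theorem coin_real_singleton_pos (s : ℝ) (b : Bool) : 0 < (coin s).real {b} := by
  rw [coin_real_singleton]
  exact mul_pos (exp_pos _) (sigmoid_pos _)

theorem coin_real_singleton_eq_coordWt (s : ℝ) (b : Bool) :
    (coin s).real {b} = coordWt (1 / (1 + exp s)) b := by
  cases b
  · simp [coin_real_false, sigmoid_def, coordWt]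
  · rw [coin_real_true, sigmoid_def, exp_neg, coordWt, if_pos rfl]
    field_simp
    ring

theorem coin_zero_real_singleton (b : Bool) : (coin 0).real {b} = 1 / 2 := by
  simp [coin_real_singleton]

theorem coin_real_singleton_div (s : ℝ) (b c : Bool) :
    (coin s).real {c} / (coin s).real {b} = exp (s * (c.toNat - b.toNat)) := by
  rw [coin_real_singleton, coin_real_singleton, mul_div_mul_right _ _ (sigmoid_pos _).ne',
    ← exp_sub, mul_sub]

theorem coin_real_singleton_le (s t : ℝ) (b : Bool) :
    (coin s).real {b} ≤ exp |s - t| * (coin t).real {b} := by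
  cases b
  · simpa only [coin_real_false, neg_sub_neg, abs_sub_comm t s] using
      sigmoid_le_exp_abs_sub_mul (-s) (-t)
  · simpa only [coin_real_true] using sigmoid_le_exp_abs_sub_mul s t

variable {ι : Type*} {a a' : ι → ℝ} {δ : ℝ}

theorem prod_coin_real_div_le {J : Finset ι} (h : ∑ i ∈ J, |a' i - a i| ≤ δ) (w : ι → Bool) :
    ∏ i ∈ J, (coin (a' i)).real {w i} / (coin (a i)).real {w i} ≤ exp δ :=
  calc ∏ i ∈ J, (coin (a' i)).real {w i} / (coin (a i)).real {w i}
      ≤ ∏ i ∈ J, exp |a' i - a i| := Finset.prod_le_prod (fun _ _ => by positivity) fun i _ =>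
        (div_le_iff₀ (coin_real_singleton_pos _ _)).2 (coin_real_singleton_le _ _ _)
    _ = exp (∑ i ∈ J, |a' i - a i|) := (exp_sum _ _).symm
    _ ≤ exp δ := exp_le_exp.2 h

theorem exp_neg_le_prod_coin_real_div {J : Finset ι} (h : ∑ i ∈ J, |a' i - a i| ≤ δ)
    (w : ι → Bool) :
    exp (-δ) ≤ ∏ i ∈ J, (coin (a' i)).real {w i} / (coin (a i)).real {w i} := by
  have hinv := prod_coin_real_div_le (a := a') (a' := a) (J := J) (δ := δ)
    (by simpa only [abs_sub_comm] using h) w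
  have hpos : 0 < ∏ i ∈ J, (coin (a i)).real {w i} / (coin (a' i)).real {w i} :=
    Finset.prod_pos fun i _ =>
      div_pos (coin_real_singleton_pos _ _) (coin_real_singleton_pos _ _)
  simpa only [exp_neg, ← Finset.prod_inv_distrib, inv_div] using inv_anti₀ hpos hinv

theorem prod_coin_div (J : Finset ι) (w : ι → Bool) :
    ∏ i ∈ J, coin (a' i) {w i} / coin (a i) {w i} =
      ENNReal.ofReal (∏ i ∈ J, (coin (a' i)).real {w i} / (coin (a i)).real {w i}) := by
  rw [ENNReal.ofReal_prod_of_nonneg fun _ _ => by positivity]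
  refine Finset.prod_congr rfl fun i _ => ?_
  rw [ENNReal.ofReal_div_of_pos (coin_real_singleton_pos _ _), ofReal_measureReal,
    ofReal_measureReal]

theorem rnDeriv_infinitePi_coin_mem_Icc {F : Finset ι}
    (h : ∀ J : Finset ι, Disjoint J F → ∑ i ∈ J, |a' i - a i| ≤ δ) :
    ∀ᵐ w ∂Measure.infinitePi fun i => coin (a i),
      ((Measure.infinitePi fun i => coin (a' i)).rnDeriv
        (Measure.infinitePi fun i => coin (a i)) w).toReal ∈
      Set.Icc (exp (-δ) * ∏ i ∈ F, (coin (a' i)).real {w i} / (coin (a i)).real {w i})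
        (exp δ * ∏ i ∈ F, (coin (a' i)).real {w i} / (coin (a i)).real {w i}) := by
  let ρ : ι → Bool → ENNReal := fun i b => coin (a' i) {b} / coin (a i) {b}
  have hρ : ∀ i, Measurable (ρ i) := fun _ => measurable_from_top
  have hdensity : (fun i => coin (a' i)) = fun i => (coin (a i)).withDensity (ρ i) :=
    funext fun i => eq_withDensity_singleton_div fun b =>
      (measureReal_ne_zero_iff (measure_ne_top _ _)).1 (coin_real_singleton_pos _ b).ne'
  have : ∀ i, IsProbabilityMeasure ((coin (a i)).withDensity (ρ i)) := fun i => by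
    rw [← congrFun hdensity i]; infer_instance
  have hbound : ∀ J : Finset ι, Disjoint J F → ∀ w : ι → Bool,
      ENNReal.ofReal (exp (-δ)) ≤ ∏ i ∈ J, ρ i (w i) ∧
        ∏ i ∈ J, ρ i (w i) ≤ ENNReal.ofReal (exp δ) := fun J hJ w => by
    rw [prod_coin_div]
    exact ⟨ENNReal.ofReal_le_ofReal (exp_neg_le_prod_coin_real_div (h J hJ) w),
      ENNReal.ofReal_le_ofReal (prod_coin_real_div_le (h J hJ) w)⟩
  rw [hdensity]
  filter_upwards [le_rnDeriv_infinitePi_withDensity hρ ENNReal.ofReal_ne_top hbound,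
    rnDeriv_infinitePi_withDensity_le hρ ENNReal.ofReal_ne_top fun J hJ w => (hbound J hJ w).2]
    with w hlower hupper
  rw [prod_coin_div, ← ENNReal.ofReal_mul (exp_pos _).le] at hlower hupper
  exact ⟨(ENNReal.ofReal_le_iff_le_toReal (ne_top_of_le_ne_top ENNReal.ofReal_ne_top hupper)).1
    hlower, ENNReal.toReal_le_of_le_ofReal (mul_nonneg (exp_pos _).le
      (Finset.prod_nonneg fun _ _ => by positivity)) hupper⟩

end Coin

section Shift

open ProbabilityTheory

theorem shiftT_iterate_apply (n : ℕ) (w : Xspace) (k : ℤ) : shiftT^[n] w k = w (k + n) := by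
  induction n generalizing k with
  | zero => simp
  | succ n ih =>
    rw [Function.iterate_succ_apply', shiftT, ih]
    congr 1
    push_cast
    ring

theorem shiftInv_iterate_apply (n : ℕ) (w : Xspace) (k : ℤ) : shiftInv^[n] w k = w (k - n) := by
  induction n generalizing k with
  | zero => simp
  | succ n ih =>
    rw [Function.iterate_succ_apply', shiftInv, ih]
    congr 1
    push_cast
    ring

theorem map_shiftInv_iterate_infinitePi (ν : ℤ → Measure Bool) [∀ k, IsProbabilityMeasure (ν k)]
    (n : ℕ) :
    (Measure.infinitePi ν).map shiftInv^[n] = Measure.infinitePi fun k => ν (k - n) := by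
  rw [show shiftInv^[n] = fun w k => w (k - n) from
    funext fun w => funext (shiftInv_iterate_apply n w)]
  exact Measure.map_infinitePi_infinitePi_of_inj (sub_left_injective (b := (n : ℤ)))

theorem setOf_forall_mem_eq_eq_restrict_preimage {ι β : Type*} (J : Finset ι) (b : ι → β) :
    {w : ι → β | ∀ i ∈ J, w i = b i} =
      J.restrict (π := fun _ => β) ⁻¹' {J.restrict (π := fun _ => β) b} := by
  ext w
  simp [funext_iff]

theorem iIndepFun_infinitePi_comp {ι κ α β : Type*} [MeasurableSpace β] (ν : α → Measure β)
    [∀ x, IsProbabilityMeasure (ν x)] {f : ι → κ → α} (hf : (Function.uncurry f).Injective) :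
    iIndepFun (fun i (w : α → β) k => w (f i k)) (Measure.infinitePi ν) := by
  have hmarginal : ∀ i, (Measure.infinitePi ν).map (fun w k => w (f i k)) =
      Measure.infinitePi fun k => ν (f i k) := fun i =>
    Measure.map_infinitePi_infinitePi_of_inj fun k l hkl =>
      congrArg Prod.snd (hf (a₁ := (i, k)) (a₂ := (i, l)) hkl)
  rw [iIndepFun_iff_map_fun_eq_infinitePi_map fun i => by fun_prop]
  simp only [hmarginal]
  rw [← Measure.infinitePi_map_curry fun i k => ν (f i k),
    show (Measure.infinitePi fun p : ι × κ => ν (f p.1 p.2)) = _ from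
      (Measure.map_infinitePi_infinitePi_of_inj hf).symm,
    Measure.map_map (MeasurableEquiv.curry ι κ β).measurable (by fun_prop)]
  rfl

/-- The word read by `w` in the window `J + n`, indexed by `J` so that the words in different
translates of `J` can be compared. -/
def windowWord (J : Finset ℤ) (n : ℕ) (w : Xspace) : J → Bool := J.restrict (shiftT^[n] w)

theorem windowWord_apply (J : Finset ℤ) (n : ℕ) (w : Xspace) (k : J) :
    windowWord J n w k = w (k + n) :=
  shiftT_iterate_apply n w k

theorem windowWord_eq (J : Finset ℤ) (n : ℕ) : windowWord J n = fun w (k : J) => w (k + n) :=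
  funext fun w => funext (windowWord_apply J n w)

theorem measurable_windowWord (J : Finset ℤ) (n : ℕ) : Measurable (windowWord J n) := by
  rw [windowWord_eq]
  fun_prop

theorem iIndepFun_windowWord (ν : ℤ → Measure Bool) [∀ k, IsProbabilityMeasure (ν k)] (c : ℤ)
    (d : ℕ) :
    iIndepFun (fun i => windowWord (Finset.Ioc c (c + d)) (i * d)) (Measure.infinitePi ν) := by
  simp only [windowWord_eq]
  refine iIndepFun_infinitePi_comp ν ?_
  rintro ⟨i, k⟩ ⟨j, l⟩ (h : (k : ℤ) + _ = l + _)
  have hk := Finset.mem_Ioc.1 k.2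
  have hl := Finset.mem_Ioc.1 l.2
  have hij : i = j := by
    push_cast at h
    rcases lt_trichotomy (i : ℤ) j with hlt | heq | hgt
    · nlinarith
    · exact_mod_cast heq
    · nlinarith
  subst hij
  exact Prod.ext rfl (Subtype.ext (add_right_cancel h))

theorem infinitePi_real_windowWord_preimage (ν : ℤ → Measure Bool)
    [∀ k, IsProbabilityMeasure (ν k)] (J : Finset ℤ) (n : ℕ) (u : J → Bool) :
    (Measure.infinitePi ν).real (windowWord J n ⁻¹' {u}) = ∏ k : J, (ν (k + n)).real {u k} := by
  have hinj : Function.Injective fun k : J => (k : ℤ) + n :=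
    fun k l h => Subtype.ext (add_right_cancel h)
  rw [← map_measureReal_apply (measurable_windowWord J n) (measurableSet_singleton u),
    windowWord_eq, Measure.map_infinitePi_infinitePi_of_inj hinj, measureReal_def,
    Measure.infinitePi_singleton_of_fintype, ENNReal.toReal_prod]
  rfl

theorem infinitePi_coin_real_windowWord_preimage {a : ℤ → ℝ} {J : Finset ℤ} {n : ℕ}
    (h : ∀ k ∈ J, a (k + n) = 0) (u : J → Bool) :
    (Measure.infinitePi fun k => coin (a k)).real (windowWord J n ⁻¹' {u}) =
      (1 / 2) ^ J.card := by
  rw [infinitePi_real_windowWord_preimage, Finset.prod_congr rfl fun k _ => by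
    rw [h k k.2, coin_zero_real_singleton]]
  simp

theorem infinitePi_coin_real_card_false_le {ι : Type*} {a : ι → ℝ} {I : Finset ι} {m r : ℝ}
    (hm : ∀ i ∈ I, m ≤ Real.sigmoid (-a i)) (hr : 0 ≤ r) :
    (Measure.infinitePi fun i => coin (a i)).real
      {w | ((I.filter fun i => w i = false).card : ℝ) ≤ (m - r) * I.card} ≤
      Real.exp (-2 * r ^ 2 * I.card) := by
  let φ : Bool → ℝ := ({false} : Set Bool).indicator 1
  have hindep : iIndepFun (fun i (w : ι → Bool) => φ (w i))
      (Measure.infinitePi fun i => coin (a i)) := iIndepFun_infinitePi fun _ => measurable_from_top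
  have hmean : ∀ i, ∫ w, φ (w i) ∂Measure.infinitePi (fun i => coin (a i)) =
      Real.sigmoid (-a i) := fun i => by
    rw [← integral_map (φ := fun w : ι → Bool => w i) (measurable_pi_apply i).aemeasurable
      measurable_from_top.aestronglyMeasurable, Measure.infinitePi_map_eval,
      integral_indicator_one (measurableSet_singleton _), coin_real_false]
  have hcard : ∀ w : ι → Bool,
      ((I.filter fun i => w i = false).card : ℝ) = ∑ i ∈ I, φ (w i) := fun w => by
    simp only [φ, Set.indicator_apply, Set.mem_singleton_iff, Pi.one_apply, Finset.sum_boole]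
  simp only [hcard]
  refine measureReal_sum_le_le_exp hindep (fun i => by fun_prop) (fun i _ w => ?_)
    (fun i hi => (hm i hi).trans_eq (hmean i).symm) hr
  by_cases hw : w i = false <;> simp [φ, hw]

end Shift

namespace KosloffData

variable (D : KosloffData) {s t τ K n : ℕ} {k : ℤ} {δ : ℝ}

theorem M_pred_lt_N (ht : 1 ≤ t) : D.M (t - 1) < D.N t := by
  have hN := D.N_def t ht
  have hnn := D.nn_pos t ht
  omega

theorem N_le_M (ht : 1 ≤ t) : D.N t ≤ D.M t := by
  rw [D.M_def t ht]
  exact Nat.le_add_right _ _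

theorem M_strictMono : StrictMono D.M :=
  strictMono_nat_of_lt_succ fun t => (D.M_pred_lt_N t.succ_pos).trans_le (D.N_le_M t.succ_pos)

theorem lt_M (t : ℕ) : t < D.M t := by
  induction t with
  | zero => rw [D.M_zero]; exact one_pos
  | succ t ih => exact (Nat.succ_le_of_lt ih).trans_lt (D.M_strictMono t.lt_succ_self)

theorem le_M_pred (t : ℕ) : t ≤ D.M (t - 1) := by
  have := D.lt_M (t - 1)
  omega

theorem M_le_M_pred (hst : s < t) : D.M s ≤ D.M (t - 1) :=
  D.M_strictMono.monotone (Nat.le_sub_one_of_lt hst)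

theorem N_le_N (hs : 1 ≤ s) (hst : s ≤ t) : D.N s ≤ D.N t := by
  rcases hst.eq_or_lt with rfl | hst
  · rfl
  · exact ((D.N_le_M hs).trans (D.M_le_M_pred hst)).trans (D.M_pred_lt_N (hs.trans hst.le)).le

theorem log_lam (ht : 1 ≤ t) :
    Real.log (D.lam t) = (2 : ℝ) ^ (-(⌊Real.logb 2 ((D.M (t - 1) : ℝ) / D.eps t)⌋ + 1)) := by
  rw [D.lam_def t ht, Real.log_exp]

theorem log_lam_pos (ht : 1 ≤ t) : 0 < Real.log (D.lam t) := by
  rw [D.log_lam ht]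
  positivity

theorem exp_log_lam (ht : 1 ≤ t) : Real.exp (Real.log (D.lam t)) = D.lam t := by
  rw [D.lam_def t ht, Real.log_exp]

theorem log_lam_mul_M_pred_le (ht : 1 ≤ t) : Real.log (D.lam t) * D.M (t - 1) ≤ D.eps t := by
  have hε := D.eps_pos t ht
  have hM : (0 : ℝ) < D.M (t - 1) := by exact_mod_cast ht.trans (D.le_M_pred t)
  set x : ℝ := D.M (t - 1) / D.eps t with hx
  have hxpow : x ≤ 2 ^ (⌊Real.logb 2 x⌋ + 1) := by
    rw [← Real.rpow_intCast, ← Real.logb_le_iff_le_rpow one_lt_two (by positivity)]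
    exact_mod_cast (Int.lt_floor_add_one (Real.logb 2 x)).le
  rw [D.log_lam ht, ← hx, zpow_neg, inv_mul_le_iff₀ (by positivity)]
  exact (div_le_iff₀ hε).1 hxpow

theorem tendsto_log_lam : Tendsto (fun t => Real.log (D.lam t)) atTop (𝓝 0) := by
  refine squeeze_zero' ?_ ?_ D.eps_summable.tendsto_atTop_zero
  all_goals filter_upwards [eventually_ge_atTop 1] with t ht
  · exact (D.log_lam_pos ht).le
  · have hM : (1 : ℝ) ≤ D.M (t - 1) := by exact_mod_cast ht.trans (D.le_M_pred t)
    exact (le_mul_of_one_le_right (D.log_lam_pos ht).le hM).trans (D.log_lam_mul_M_pred_le ht)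

theorem exists_log_lam_eq_mul (hs : 1 ≤ s) (ht : 1 ≤ t)
    (h : Real.log (D.lam t) ≤ Real.log (D.lam s) / 4) :
    ∃ K : ℕ, 4 ≤ K ∧ Real.log (D.lam s) = K * Real.log (D.lam t) := by
  rw [D.log_lam hs, D.log_lam ht] at *
  generalize -(⌊Real.logb 2 ((D.M (t - 1) : ℝ) / D.eps t)⌋ + 1) = x at *
  generalize -(⌊Real.logb 2 ((D.M (s - 1) : ℝ) / D.eps s)⌋ + 1) = y at *
  have hpow : (2 : ℝ) ^ x ≤ 2 ^ (y - 2) := by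
    rw [zpow_sub₀ two_ne_zero]
    exact h.trans_eq (by norm_num)
  obtain ⟨j, hj⟩ := Int.eq_ofNat_of_zero_le
    (sub_nonneg.2 ((zpow_le_zpow_iff_right₀ one_lt_two).1 hpow))
  refine ⟨2 ^ (j + 2), Nat.pow_le_pow_right two_pos (Nat.le_add_left 2 j), ?_⟩
  rw [show y = ((j + 2 : ℕ) : ℤ) + x by push_cast; omega, zpow_add₀ two_ne_zero, zpow_natCast]
  norm_num

theorem lam_pow_mem_Aset (hs : 1 ≤ s) (hst : s ≤ t) :
    D.lam s ^ D.nn s ∈ Aset D.lam D.nn t := by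
  refine ⟨Pi.single s (D.nn s : ℤ), fun u => ?_, ?_⟩
  · rcases eq_or_ne u s with rfl | hu
    · simp
    · simp [hu]
  · rw [Finset.prod_eq_single_of_mem s (Finset.mem_Icc.2 ⟨hs, hst⟩) fun u _ hu => by simp [hu]]
    simp

theorem eight_mul_le_nn (hs : 1 ≤ s) (hst : s < t)
    (hK : Real.log (D.lam s) = K * Real.log (D.lam t)) : 8 * K ≤ D.nn t := by
  have ht : 1 ≤ t := hs.trans hst.le
  have hpos := D.log_lam_pos ht
  have hstar := D.prop_star t ht _ (D.lam_pow_mem_Aset hs (Nat.le_sub_one_of_lt hst))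
  rw [← D.exp_log_lam hs, ← D.exp_log_lam ht, ← Real.exp_nat_mul, ← Real.exp_nat_mul,
    ← Real.exp_mul, Real.exp_le_exp, hK] at hstar
  have hscaled : (8 * (D.nn s * K : ℝ)) * Real.log (D.lam t) ≤ D.nn t * Real.log (D.lam t) := by
    push_cast at hstar
    linarith
  have hnn : 8 * (D.nn s * K) ≤ D.nn t := by
    exact_mod_cast le_of_mul_le_mul_right hscaled hpos
  exact (Nat.mul_le_mul_left 8 (Nat.le_mul_of_pos_left K (D.nn_pos s hs))).trans hnn

theorem eventually_forall_two_mul_sum_Ioc_eps_le (hδ : 0 < δ) :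
    ∀ᶠ τ : ℕ in atTop, ∀ T, 2 * ∑ t ∈ Finset.Ioc τ T, D.eps t ≤ δ := by
  obtain ⟨S, hS⟩ := summable_iff_vanishing_norm.1 D.eps_summable (δ / 2) (half_pos hδ)
  filter_upwards [eventually_ge_atTop (S.sup id)] with τ hτ T
  have hdisj : Disjoint (Finset.Ioc τ T) S := Finset.disjoint_left.2 fun t ht htS =>
    (Finset.mem_Ioc.1 ht).1.not_ge ((Finset.le_sup (f := id) htS).trans hτ)
  linarith [(le_abs_self _).trans_lt (hS _ hdisj)]

/-- The `t`-th biased block `-N_t < k ≤ -M_{t-1}`, where `P_k({0}) = 1 / (1 + λ_t)`. -/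
def biasBlock (t : ℕ) : Finset ℤ := Finset.Icc (-(D.N t : ℤ) + 1) (-(D.M (t - 1) : ℤ))

theorem mem_biasBlock : k ∈ D.biasBlock t ↔ -(D.N t : ℤ) < k ∧ k ≤ -(D.M (t - 1) : ℤ) := by
  rw [biasBlock, Finset.mem_Icc, Int.add_one_le_iff]

theorem card_biasBlock (ht : 1 ≤ t) : (D.biasBlock t).card = D.nn t := by
  have hN := D.N_def t ht
  rw [biasBlock, Int.card_Icc]
  omega

theorem le_natAbs_of_mem_biasBlock (h : k ∈ D.biasBlock t) : t ≤ k.natAbs := by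
  have hk := (D.mem_biasBlock.1 h).2
  have ht := D.le_M_pred t
  omega

theorem notMem_biasBlock_of_ne (hs : 1 ≤ s) (ht : 1 ≤ t) (hst : s ≠ t) (hk : k ∈ D.biasBlock s) :
    k ∉ D.biasBlock t := by
  rw [mem_biasBlock] at *
  rcases hst.lt_or_gt with hlt | hgt
  · have := D.N_le_M hs
    have := D.M_le_M_pred hlt
    omega
  · have := D.N_le_M ht
    have := D.M_le_M_pred hgt
    omega

theorem notMem_biasBlock_of_mem_gap (ht : 1 ≤ t) (hM : -(D.M s : ℤ) < k)
    (hN : k ≤ -(D.N s : ℤ)) : k ∉ D.biasBlock t := by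
  rw [mem_biasBlock]
  rcases le_or_gt t s with hle | hgt
  · have := D.N_le_N ht hle
    omega
  · have := D.M_le_M_pred hgt
    omega

/-- The log-odds `log (P_k({1}) / P_k({0}))` of the `k`-th coordinate: it is `log λ_t` on the
`t`-th biased block and `0` elsewhere. The blocks meeting `k` have index at most `|k|`. -/
def logOdds (k : ℤ) : ℝ :=
  ∑ t ∈ Finset.Icc 1 k.natAbs, if k ∈ D.biasBlock t then Real.log (D.lam t) else 0

theorem logOdds_eq_zero (h : ∀ t, 1 ≤ t → k ∉ D.biasBlock t) : D.logOdds k = 0 :=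
  Finset.sum_eq_zero fun t ht => if_neg (h t (Finset.mem_Icc.1 ht).1)

theorem logOdds_of_mem_biasBlock (ht : 1 ≤ t) (hk : k ∈ D.biasBlock t) :
    D.logOdds k = Real.log (D.lam t) := by
  rw [logOdds, Finset.sum_eq_single_of_mem t
    (Finset.mem_Icc.2 ⟨ht, D.le_natAbs_of_mem_biasBlock hk⟩) fun s hs hst =>
      if_neg (D.notMem_biasBlock_of_ne ht (Finset.mem_Icc.1 hs).1 hst.symm hk), if_pos hk]

theorem logOdds_of_nonneg (hk : 0 ≤ k) : D.logOdds k = 0 :=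
  D.logOdds_eq_zero fun t ht hmem => by
    have := (D.mem_biasBlock.1 hmem).2
    have := D.le_M_pred t
    omega

theorem logOdds_of_mem_gap (hM : -(D.M t : ℤ) < k) (hN : k ≤ -(D.N t : ℤ)) :
    D.logOdds k = 0 :=
  D.logOdds_eq_zero fun _ hs => D.notMem_biasBlock_of_mem_gap hs hM hN

theorem exists_M_pred_le_natAbs_lt_M (hk : k < 0) :
    ∃ t, 1 ≤ t ∧ D.M (t - 1) ≤ k.natAbs ∧ k.natAbs < D.M t := by
  have hex : ∃ t, k.natAbs < D.M t := ⟨_, D.lt_M _⟩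
  have hfind : 1 ≤ Nat.find hex := by
    rw [Nat.one_le_iff_ne_zero, Ne, Nat.find_eq_zero, D.M_zero]
    omega
  exact ⟨Nat.find hex, hfind, not_lt.1 (Nat.find_min hex (by omega)), Nat.find_spec hex⟩

end KosloffData

namespace IsKosloffMeasure

variable {D : KosloffData} {p : ℤ → ℝ} {P : Measure Xspace}

theorem apply_eq (hP : IsKosloffMeasure D p P) (k : ℤ) :
    p k = 1 / (1 + Real.exp (D.logOdds k)) := by
  obtain ⟨-, hnonneg, hblock, hgap, -⟩ := hP
  rcases le_or_gt 0 k with hk | hk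
  · rw [hnonneg k hk, D.logOdds_of_nonneg hk, Real.exp_zero, one_add_one_eq_two]
  obtain ⟨t, ht, hpred, hlt⟩ := D.exists_M_pred_le_natAbs_lt_M hk
  rcases le_or_gt k (-(D.N t : ℤ)) with hN | hN
  · rw [hgap t ht k (by omega) hN, D.logOdds_of_mem_gap (by omega) hN, Real.exp_zero,
      one_add_one_eq_two]
  · have hM : k ≤ -(D.M (t - 1) : ℤ) := by omega
    rw [hblock t ht k hN hM, D.logOdds_of_mem_biasBlock ht (D.mem_biasBlock.2 ⟨hN, hM⟩),
      D.exp_log_lam ht]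

theorem eq_infinitePi (hP : IsKosloffMeasure D p P) :
    P = Measure.infinitePi fun k => coin (D.logOdds k) := by
  have : IsProbabilityMeasure P := hP.1
  refine eq_infinitePi_of_cofinal fun F => ?_
  obtain ⟨x, y, hF⟩ : ∃ x y, F ⊆ Finset.Icc x y := by
    obtain ⟨x, hx⟩ := F.bddBelow
    obtain ⟨y, hy⟩ := F.bddAbove
    exact ⟨x, y, fun k hk => Finset.mem_Icc.2 ⟨hx hk, hy hk⟩⟩
  refine ⟨Finset.Icc x y, hF, Measure.ext_of_singleton fun u => ?_⟩
  let b : Xspace := fun k => if h : k ∈ Finset.Icc x y then u ⟨k, h⟩ else false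
  have hb : (Finset.Icc x y).restrict (π := fun _ => Bool) b = u := funext fun k => dif_pos k.2
  rw [Measure.map_apply (by fun_prop) (measurableSet_singleton u), ← hb,
    ← setOf_forall_mem_eq_eq_restrict_preimage, hP.2.2.2.2, Measure.pi_singleton,
    ← Finset.prod_coe_sort]
  refine Finset.prod_congr rfl fun k _ => ?_
  rw [hP.apply_eq, ← coin_real_singleton_eq_coordWt, ofReal_measureReal, Finset.restrict]

end IsKosloffMeasure

section Derivative

theorem sum_abs_indicator_Icc_sub_le (c d : ℤ) (n : ℕ) (J : Finset ℤ) :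
    ∑ k ∈ J, |(if k - n ∈ Finset.Icc c d then (1 : ℝ) else 0) -
      if k ∈ Finset.Icc c d then 1 else 0| ≤ 2 * n := by
  have hIco : ∀ x : ℤ, ∑ k ∈ J, (if k ∈ Finset.Ico x (x + n) then (1 : ℝ) else 0) ≤ n := fun x => by
    rw [Finset.sum_boole]
    have hcard := Finset.card_le_card
      (fun k hk => (Finset.mem_filter.1 hk).2 : (J.filter (· ∈ Finset.Ico x (x + n))) ⊆ _)
    rw [Int.card_Ico, add_sub_cancel_left, Int.toNat_natCast] at hcard
    exact_mod_cast hcard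
  calc ∑ k ∈ J, |(if k - n ∈ Finset.Icc c d then (1 : ℝ) else 0) -
        if k ∈ Finset.Icc c d then 1 else 0|
      ≤ ∑ k ∈ J, ((if k ∈ Finset.Ico c (c + n) then (1 : ℝ) else 0) +
          if k ∈ Finset.Ico (d + 1) (d + 1 + n) then 1 else 0) := by
        refine Finset.sum_le_sum fun k _ => ?_
        simp only [Finset.mem_Icc, Finset.mem_Ico]
        split_ifs <;> first | (exfalso; omega) | norm_num
    _ ≤ n + n := by
        rw [Finset.sum_add_distrib]
        exact add_le_add (hIco _) (hIco _)
    _ = 2 * n := (two_mul _).symm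

theorem prod_union_map_coin_real_div {a : ℤ → ℝ} {A : Finset ℤ} {n : ℕ}
    (hdisj : Disjoint A (A.map (addRightEmbedding (n : ℤ)))) (hleft : ∀ k ∈ A, a (k - n) = 0)
    (hright : ∀ k ∈ A, a (k + n) = 0) (w : Xspace) :
    ∏ k ∈ A ∪ A.map (addRightEmbedding (n : ℤ)),
        (coin (a (k - n))).real {w k} / (coin (a k)).real {w k} =
      Real.exp (∑ k ∈ A, a k * ((w (k + n)).toNat - (w k).toNat)) := by
  rw [Finset.prod_union hdisj, Finset.prod_map, ← Finset.prod_mul_distrib, Real.exp_sum]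
  refine Finset.prod_congr rfl fun k hk => ?_
  rw [addRightEmbedding_apply, hleft k hk, add_sub_cancel_right, hright k hk,
    coin_zero_real_singleton, coin_zero_real_singleton, ← coin_real_singleton_div]
  field_simp

namespace KosloffData

variable (D : KosloffData) {τ n T : ℕ} {k : ℤ} {δ : ℝ}

/-- The coordinates `-N_τ < k < 0`, which contain the first `τ` biased blocks. They determine
`(T^n)'` up to the contribution of the later blocks. -/
def core (τ : ℕ) : Finset ℤ := Finset.Ioo (-(D.N τ : ℤ)) 0

theorem logOdds_of_notMem_core (hτ : 1 ≤ τ) (hk : k ∉ D.core τ) (hT : k.natAbs ≤ T) :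
    D.logOdds k = ∑ t ∈ Finset.Ioc τ T,
      Real.log (D.lam t) * if k ∈ D.biasBlock t then 1 else 0 := by
  have hlow : ∀ t, 1 ≤ t → t ≤ τ → k ∉ D.biasBlock t := fun t ht htτ hmem => by
    rw [mem_biasBlock] at hmem
    rw [core, Finset.mem_Ioo] at hk
    have := D.N_le_N ht htτ
    have := D.le_M_pred t
    omega
  simp only [mul_ite, mul_one, mul_zero]
  rw [logOdds, ← Finset.sum_filter, ← Finset.sum_filter]
  refine Finset.sum_congr (Finset.ext fun t => ?_) fun _ _ => rfl
  rw [Finset.mem_filter, Finset.mem_filter, Finset.mem_Icc, Finset.mem_Ioc]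
  refine and_congr_left fun hmem => ?_
  have := D.le_natAbs_of_mem_biasBlock hmem
  have := hlow t
  constructor <;> grind

theorem sum_abs_logOdds_sub_le (hτ : 1 ≤ τ) (hn : n ≤ D.M τ)
    (hδ : ∀ T, 2 * ∑ t ∈ Finset.Ioc τ T, D.eps t ≤ δ) {J : Finset ℤ}
    (hJ : ∀ k ∈ J, k ∉ D.core τ ∧ k - n ∉ D.core τ) :
    ∑ k ∈ J, |D.logOdds (k - n) - D.logOdds k| ≤ δ := by
  let T := J.sup Int.natAbs + n
  let χ : ℕ → ℤ → ℝ := fun t k => if k ∈ D.biasBlock t then 1 else 0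
  have hlog : ∀ t ∈ Finset.Ioc τ T, 0 ≤ Real.log (D.lam t) := fun t ht =>
    (D.log_lam_pos (hτ.trans (Finset.mem_Ioc.1 ht).1.le)).le
  calc ∑ k ∈ J, |D.logOdds (k - n) - D.logOdds k|
      ≤ ∑ k ∈ J, ∑ t ∈ Finset.Ioc τ T, Real.log (D.lam t) * |χ t (k - n) - χ t k| := by
        refine Finset.sum_le_sum fun k hk => ?_
        have hkT : k.natAbs + n ≤ T := Nat.add_le_add_right (Finset.le_sup hk) n
        rw [D.logOdds_of_notMem_core hτ (hJ k hk).1 (T := T) (by omega),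
          D.logOdds_of_notMem_core hτ (hJ k hk).2 (T := T) (by omega), ← Finset.sum_sub_distrib]
        refine (Finset.abs_sum_le_sum_abs _ _).trans_eq (Finset.sum_congr rfl fun t ht => ?_)
        rw [← mul_sub, abs_mul, abs_of_nonneg (hlog t ht)]
    _ ≤ ∑ t ∈ Finset.Ioc τ T, Real.log (D.lam t) * (2 * n) := by
        rw [Finset.sum_comm]
        refine Finset.sum_le_sum fun t ht => ?_
        rw [← Finset.mul_sum]
        exact mul_le_mul_of_nonneg_left (sum_abs_indicator_Icc_sub_le _ _ _ _) (hlog t ht)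
    _ ≤ ∑ t ∈ Finset.Ioc τ T, 2 * D.eps t := by
        refine Finset.sum_le_sum fun t ht => ?_
        have hτt := (Finset.mem_Ioc.1 ht).1
        have hnM : (n : ℝ) ≤ D.M (t - 1) := by exact_mod_cast hn.trans (D.M_le_M_pred hτt)
        linarith [mul_le_mul_of_nonneg_left hnM (hlog t ht),
          D.log_lam_mul_M_pred_le (hτ.trans hτt.le)]
    _ ≤ δ := by
        rw [← Finset.mul_sum]
        exact hδ T

end KosloffData

theorem IsKosloffMeasure.ae_rnD_mem_Icc {D : KosloffData} {p : ℤ → ℝ} {P : Measure Xspace}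
    (hP : IsKosloffMeasure D p P) {τ n : ℕ} (hτ : 1 ≤ τ) (hNn : D.N τ ≤ n)
    (hnM : n + D.N τ ≤ D.M τ) {δ : ℝ} (hδ : ∀ T, 2 * ∑ t ∈ Finset.Ioc τ T, D.eps t ≤ δ) :
    ∀ᵐ w ∂P, (rnD P n w).toReal ∈
      Set.Icc
        (Real.exp (-δ) *
          Real.exp (∑ k ∈ D.core τ, D.logOdds k * ((w (k + n)).toNat - (w k).toNat)))
        (Real.exp δ *
          Real.exp (∑ k ∈ D.core τ, D.logOdds k * ((w (k + n)).toNat - (w k).toNat))) := by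
  let F := D.core τ ∪ (D.core τ).map (addRightEmbedding (n : ℤ))
  have hcore : ∀ k ∈ D.core τ, -(D.N τ : ℤ) < k ∧ k < 0 := fun k hk => Finset.mem_Ioo.1 hk
  have hleft : ∀ k ∈ D.core τ, D.logOdds (k - n) = 0 := fun k hk => by
    have := hcore k hk
    exact D.logOdds_of_mem_gap (t := τ) (by omega) (by omega)
  have hright : ∀ k ∈ D.core τ, D.logOdds (k + n) = 0 := fun k hk => by
    have := hcore k hk
    exact D.logOdds_of_nonneg (by omega)
  have hdisj : Disjoint (D.core τ) ((D.core τ).map (addRightEmbedding (n : ℤ))) := by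
    refine Finset.disjoint_left.2 fun k hk hk' => ?_
    obtain ⟨l, hl, rfl⟩ := Finset.mem_map.1 hk'
    have hkn := hcore _ hk
    have := hcore l hl
    rw [addRightEmbedding_apply] at hkn
    omega
  have htail : ∀ J : Finset ℤ, Disjoint J F →
      ∑ k ∈ J, |D.logOdds (k - n) - D.logOdds k| ≤ δ := fun J hJ =>
    D.sum_abs_logOdds_sub_le hτ ((Nat.le_add_right _ _).trans hnM) hδ fun k hk => by
      have hkF := Finset.disjoint_left.1 hJ hk
      simpa [F, not_or, ← eq_sub_iff_add_eq] using hkF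
  rw [hP.eq_infinitePi, rnD, map_shiftInv_iterate_infinitePi]
  filter_upwards [rnDeriv_infinitePi_coin_mem_Icc htail] with w hw
  rwa [prod_union_map_coin_real_div hdisj hleft hright] at hw

end Derivative

section Return

open ProbabilityTheory

theorem exists_sum_toNat_eq_add {ι : Type*} {I : Finset ι} {u : ι → Bool} {K : ℕ}
    (hK : K ≤ (I.filter fun i => u i = false).card) :
    ∃ u' : ι → Bool, (∀ i ∉ I, u' i = u i) ∧
      ∑ i ∈ I, (u' i).toNat = ∑ i ∈ I, (u i).toNat + K := by
  classical
  obtain ⟨S, hS, hcard⟩ := Finset.exists_subset_card_eq hK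
  have hSI : S ⊆ I := hS.trans (Finset.filter_subset _ _)
  refine ⟨fun i => if i ∈ S then true else u i, fun i hi => if_neg fun h => hi (hSI h), ?_⟩
  have hflip : ∀ i, (if i ∈ S then true else u i).toNat =
      (u i).toNat + if i ∈ S then 1 else 0 := fun i => by
    by_cases hi : i ∈ S
    · simp [hi, (Finset.mem_filter.1 (hS hi)).2]
    · simp [hi]
  simp only [hflip, Finset.sum_add_distrib]
  rw [← Finset.sum_filter, Finset.filter_mem_eq_inter, Finset.inter_eq_right.2 hSI,
    Finset.sum_const, hcard, smul_eq_mul, mul_one]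

theorem infinitePi_real_inter_restrict_preimage {ι : Type*} {X : ι → Type*}
    [∀ i, MeasurableSpace (X i)] (ν : ∀ i, Measure (X i)) [∀ i, IsProbabilityMeasure (ν i)]
    {V I : Finset ι} (hVI : Disjoint V I) {A : Set (∀ i : V, X i)} (hA : MeasurableSet A)
    {B : Set (∀ i : I, X i)} (hB : MeasurableSet B) :
    (Measure.infinitePi ν).real (V.restrict ⁻¹' A ∩ I.restrict ⁻¹' B) =
      (Measure.infinitePi ν).real (V.restrict ⁻¹' A) *
        (Measure.infinitePi ν).real (I.restrict ⁻¹' B) := by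
  have hcoord : iIndepFun (fun i (x : ∀ i, X i) => x i) (Measure.infinitePi ν) :=
    iIndepFun_infinitePi (X := fun _ => id) fun _ => measurable_id
  have hindep := hcoord.indepFun_finset V I hVI fun i => measurable_pi_apply i
  rw [measureReal_def, measureReal_def, measureReal_def, ← ENNReal.toReal_mul]
  exact congrArg _ (hindep.measure_inter_preimage_eq_mul _ _ hA hB)

theorem exp_neg_four_le : Real.exp (-4) ≤ 1 / 20 := by
  rw [Real.exp_neg, one_div]
  refine inv_anti₀ (by norm_num) ?_
  calc (20 : ℝ) ≤ 2.7 ^ 4 := by norm_num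
    _ ≤ Real.exp 1 ^ 4 := by gcongr; linarith [Real.exp_one_gt_d9]
    _ = Real.exp 4 := by rw [← Real.exp_nat_mul]; norm_num

theorem infinitePi_coin_real_card_false_lt_le {ι : Type*} {a : ι → ℝ} {I : Finset ι}
    (ha : ∀ i ∈ I, 2 / 5 ≤ Real.sigmoid (-a i)) (hI : 32 ≤ I.card) {K : ℕ}
    (hK : 8 * K ≤ I.card) :
    (Measure.infinitePi fun i => coin (a i)).real
      {w | (I.filter fun i => w i = false).card < K} ≤ 1 / 20 := by
  set P := Measure.infinitePi fun i => coin (a i)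
  have hK' : (8 * K : ℝ) ≤ I.card := by exact_mod_cast hK
  have hI' : (32 : ℝ) ≤ I.card := by exact_mod_cast hI
  calc P.real {w | (I.filter fun i => w i = false).card < K}
      ≤ P.real {w | ((I.filter fun i => w i = false).card : ℝ) ≤ (2 / 5 - 1 / 4) * I.card} := by
        refine measureReal_mono fun w (hw : _ < K) => ?_
        have hw' : ((I.filter fun i => w i = false).card : ℝ) < K := by exact_mod_cast hw
        rw [Set.mem_ofPred_eq]
        linarith
    _ ≤ Real.exp (-2 * (1 / 4) ^ 2 * I.card) :=
        infinitePi_coin_real_card_false_le ha (by norm_num)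
    _ ≤ Real.exp (-4) := by
        gcongr
        linarith
    _ ≤ 1 / 20 := exp_neg_four_le

theorem mul_infinitePi_coin_real_cylinder_le_inter_card_false {ι : Type*} {a : ι → ℝ}
    {V I : Finset ι} (hVI : Disjoint V I) (b : ι → Bool)
    (ha : ∀ i ∈ I, 2 / 5 ≤ Real.sigmoid (-a i))
    (hI : 32 ≤ I.card) {K : ℕ} (hK : 8 * K ≤ I.card) :
    19 / 20 * (Measure.infinitePi fun i => coin (a i)).real {w | ∀ i ∈ V, w i = b i} ≤
      (Measure.infinitePi fun i => coin (a i)).real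
        {w | (∀ i ∈ V, w i = b i) ∧ K ≤ (I.filter fun i => w i = false).card} := by
  set P := Measure.infinitePi fun i => coin (a i)
  let B : Set (I → Bool) := {u | (Finset.univ.filter fun i => u i = false).card < K}
  have hB : I.restrict ⁻¹' B = {w | (I.filter fun i => w i = false).card < K} := by
    ext w
    have hcard : (Finset.univ.filter fun i : I => w i = false).card =
        (I.filter fun i => w i = false).card := by
      rw [Finset.card_filter, Finset.card_filter,
        Finset.sum_coe_sort I fun i => if w i = false then 1 else 0]
    exact Iff.of_eq (congrArg (· < K) hcard)
  have hsplit : {w | (∀ i ∈ V, w i = b i) ∧ K ≤ (I.filter fun i => w i = false).card} =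
      V.restrict ⁻¹' ({V.restrict b} : Set (V → Bool)) ∩ I.restrict ⁻¹' Bᶜ := by
    rw [Set.preimage_compl, hB, ← setOf_forall_mem_eq_eq_restrict_preimage]
    ext w
    simp
  have hoften : 19 / 20 ≤ P.real (I.restrict ⁻¹' Bᶜ) := by
    rw [Set.preimage_compl, probReal_compl_eq_one_sub
      (I.measurable_restrict B.toFinite.measurableSet), hB]
    linarith [infinitePi_coin_real_card_false_lt_le ha hI hK]
  rw [hsplit, infinitePi_real_inter_restrict_preimage _ hVI (measurableSet_singleton _)
    Bᶜ.toFinite.measurableSet, mul_comm, setOf_forall_mem_eq_eq_restrict_preimage]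
  gcongr

theorem one_sub_pow_mul_infinitePi_coin_real_le_exists_window {a : ℤ → ℝ} {c : ℤ} {d : ℕ}
    {s : Finset ℕ} (hs : 0 ∉ s)
    (ha : ∀ i ∈ s, ∀ k ∈ Finset.Ioc c (c + d), a (k + (i * d : ℕ)) = 0)
    {E : Set Xspace} {R : Xspace → Xspace → Prop} (hR : ∀ w ∈ E, ∃ w', R w w') :
    (1 - (1 - (1 / 2) ^ d) ^ s.card) * (Measure.infinitePi fun k => coin (a k)).real E ≤
      (Measure.infinitePi fun k => coin (a k)).real
        {w | ∃ i ∈ s, ∃ v v', (∀ k ∈ Finset.Ioc c (c + d), v k = w k) ∧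
          (∀ k ∈ Finset.Ioc c (c + d), v' k = w (k + (i * d : ℕ))) ∧ R v v'} := by
  set J := Finset.Ioc c (c + d) with hJ
  set P := Measure.infinitePi fun k => coin (a k)
  have hq : ∀ i ∈ s, ∀ u, (1 / 2 : ℝ) ^ d ≤ P.real (windowWord J (i * d) ⁻¹' {u}) :=
    fun i hi u => by
      rw [infinitePi_coin_real_windowWord_preimage (ha i hi), hJ, Int.card_Ioc,
        add_sub_cancel_left, Int.toNat_natCast]
  have hwords := one_sub_pow_mul_measureReal_le_measureReal_exists_rel
    (iIndepFun_windowWord (fun k => coin (a k)) c d)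
    (fun i => measurable_windowWord _ _) hs hq (A := J.restrict '' E)
    (R := fun u u' => ∃ v v', J.restrict v = u ∧ J.restrict v' = u' ∧ R v v')
    (by
      rintro _ ⟨v, hv, rfl⟩
      obtain ⟨v', hvv'⟩ := hR v hv
      exact ⟨_, v, v', rfl, rfl, hvv'⟩)
  have hpow : (1 - (1 / 2 : ℝ) ^ d) ^ s.card ≤ 1 :=
    pow_le_one₀ (sub_nonneg.2 (pow_le_one₀ (by norm_num) (by norm_num)))
      (sub_le_self _ (by positivity))
  calc (1 - (1 - (1 / 2) ^ d) ^ s.card) * P.real E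
      ≤ (1 - (1 - (1 / 2) ^ d) ^ s.card) * P.real (windowWord J (0 * d) ⁻¹' (J.restrict '' E)) := by
        refine mul_le_mul_of_nonneg_left (measureReal_mono fun w hw => ?_) (sub_nonneg.2 hpow)
        rw [zero_mul]
        exact ⟨w, hw, rfl⟩
    _ ≤ _ := hwords
    _ ≤ _ := by
        refine measureReal_mono ?_
        rintro w ⟨i, hi, v, v', hv, hv', hvv'⟩
        refine ⟨i, hi, v, v', fun k hk => ?_, fun k hk => ?_, hvv'⟩
        · simpa [windowWord_apply] using congrFun hv ⟨k, hk⟩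
        · rw [← windowWord_apply J (i * d) w ⟨k, hk⟩]
          exact congrFun hv' ⟨k, hk⟩

theorem one_sub_inv_two_pow_pow_le {N : ℕ} (hN : 3 ≤ N) :
    (1 - (1 / 2 : ℝ) ^ (2 * N)) ^ 2 ^ (3 * N - 1) ≤ 1 / 20 := by
  have hexponent : (4 : ℝ) ≤ 2 ^ (3 * N - 1) * (1 / 2) ^ (2 * N) := by
    rw [show 3 * N - 1 = (N - 1) + 2 * N by omega, pow_add, mul_assoc, ← mul_pow,
      mul_one_div_cancel two_ne_zero, one_pow, mul_one]
    calc (4 : ℝ) = 2 ^ 2 := by norm_num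
      _ ≤ 2 ^ (N - 1) := pow_le_pow_right₀ one_le_two (by omega)
  calc (1 - (1 / 2 : ℝ) ^ (2 * N)) ^ 2 ^ (3 * N - 1)
      ≤ Real.exp (-(1 / 2) ^ (2 * N)) ^ 2 ^ (3 * N - 1) :=
        pow_le_pow_left₀ (sub_nonneg.2 (pow_le_one₀ (by norm_num) (by norm_num)))
          (Real.one_sub_le_exp_neg _) _
    _ = Real.exp (-(2 ^ (3 * N - 1) * (1 / 2) ^ (2 * N))) := by
        rw [← Real.exp_nat_mul]
        push_cast
        rw [mul_neg]
    _ ≤ Real.exp (-4) := by gcongr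
    _ ≤ 1 / 20 := exp_neg_four_le

end Return

section Conclusion

namespace KosloffData

variable (D : KosloffData) {τ K n l : ℕ} {b w : Xspace}

/-- `T^l w` returns to the cylinder `[b]_{-n}^n` of `w`, with `K` more ones than `w` in the `τ`-th
biased block and the same coordinates as `w` elsewhere in the core `-N_τ < k < 0`. -/
structure IsRaisingReturn (τ K n : ℕ) (b : Xspace) (l : ℕ) (w : Xspace) : Prop where
  mem_cylinder : ∀ k ∈ Finset.Icc (-(n : ℤ)) n, w k = b k
  iterate_mem_cylinder : ∀ k ∈ Finset.Icc (-(n : ℤ)) n, shiftT^[l] w k = b k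
  eq_off_biasBlock : ∀ k ∈ D.core τ \ D.biasBlock τ, shiftT^[l] w k = w k
  Ups_iterate : Ups D τ (shiftT^[l] w) = Ups D τ w + K

theorem eventually_lam_le {c : ℝ} (hc : 1 < c) :
    ∀ᶠ τ in atTop, D.lam τ ≤ c := by
  filter_upwards [D.tendsto_log_lam.eventually_le_const (Real.log_pos hc), eventually_ge_atTop 1]
    with τ hlog hτ
  rwa [← D.exp_log_lam hτ, ← Real.le_log_iff_exp_le (one_pos.trans hc)]

theorem Ups_eq_sum_toNat (t : ℕ) (w : Xspace) :
    Ups D t w = ((∑ k ∈ D.biasBlock t, (w k).toNat : ℕ) : ℤ) := by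
  rw [Ups, Nat.cast_sum]
  exact Finset.sum_congr rfl fun k _ => by cases w k <;> rfl

theorem biasBlock_subset_core (τ : ℕ) : D.biasBlock τ ⊆ D.core τ := fun k hk => by
  have hk' := D.mem_biasBlock.1 hk
  have := D.lt_M (τ - 1)
  exact Finset.mem_Ioo.2 ⟨hk'.1, by omega⟩

theorem disjoint_Icc_biasBlock (hn : n < D.M (τ - 1)) :
    Disjoint (Finset.Icc (-(n : ℤ)) n) (D.biasBlock τ) :=
  Finset.disjoint_left.2 fun k hk hk' => by
    have := (Finset.mem_Icc.1 hk).1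
    have := (D.mem_biasBlock.1 hk').2
    omega

theorem sigmoid_neg_logOdds_ge (hτ : 1 ≤ τ) (hlam : D.lam τ ≤ 3 / 2) {k : ℤ}
    (hk : k ∈ D.biasBlock τ) : 2 / 5 ≤ Real.sigmoid (-D.logOdds k) := by
  have hpos : 0 < D.lam τ := by rw [← D.exp_log_lam hτ]; positivity
  rw [D.logOdds_of_mem_biasBlock hτ hk, Real.sigmoid_def, neg_neg, D.exp_log_lam hτ,
    le_inv_comm₀ (by norm_num) (by positivity)]
  linarith

variable {D} in
theorem IsRaisingReturn.sum_logOdds (h : D.IsRaisingReturn τ K n b l w) (hτ : 1 ≤ τ) :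
    ∑ k ∈ D.core τ, D.logOdds k * ((w (k + l)).toNat - (w k).toNat) =
      K * Real.log (D.lam τ) := by
  have hUps := h.Ups_iterate
  simp only [Ups_eq_sum_toNat, shiftT_iterate_apply] at hUps
  have hsum : ∑ k ∈ D.biasBlock τ, (((w (k + l)).toNat : ℝ) - (w k).toNat) = K := by
    rw [Finset.sum_sub_distrib, sub_eq_iff_eq_add']
    exact_mod_cast hUps
  rw [← Finset.sum_subset (D.biasBlock_subset_core τ) fun k hk hk' => ?_]
  · rw [Finset.sum_congr rfl fun k hk => by rw [D.logOdds_of_mem_biasBlock hτ hk],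
      ← Finset.mul_sum, hsum, mul_comm]
  · rw [← shiftT_iterate_apply l w k, h.eq_off_biasBlock k (Finset.mem_sdiff.2 ⟨hk, hk'⟩), sub_self,
      mul_zero]

/-- The window `-N_τ < k ≤ N_τ`, which contains both the core and the cylinder coordinates. Its
translates by multiples of its length `2N_τ` are disjoint, hence carry independent words. -/
def window (τ : ℕ) : Finset ℤ := Finset.Ioc (-(D.N τ : ℤ)) (-D.N τ + (2 * D.N τ : ℕ))

theorem mem_window_of_mem_core {k : ℤ} (hk : k ∈ D.core τ) : k ∈ D.window τ := by
  have := Finset.mem_Ioo.1 hk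
  exact Finset.mem_Ioc.2 ⟨this.1, by omega⟩

theorem mem_window_of_mem_Icc (hτ : 1 ≤ τ) (hn : n < D.M (τ - 1)) {k : ℤ}
    (hk : k ∈ Finset.Icc (-(n : ℤ)) n) : k ∈ D.window τ := by
  have := Finset.mem_Icc.1 hk
  have := D.M_pred_lt_N hτ
  exact Finset.mem_Ioc.2 (by omega)

theorem logOdds_window_add {i : ℕ} (hi : 1 ≤ i) {k : ℤ} (hk : k ∈ D.window τ) :
    D.logOdds (k + (i * (2 * D.N τ) : ℕ)) = 0 := by
  have := Nat.le_mul_of_pos_left (2 * D.N τ) hi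
  have := (Finset.mem_Ioc.1 hk).1
  exact D.logOdds_of_nonneg (by omega)

theorem isRaisingReturn_of_eqOn_window (hτ : 1 ≤ τ) (hn : n < D.M (τ - 1)) {v v' : Xspace}
    (hv : ∀ k ∈ D.window τ, v k = w k) (hv' : ∀ k ∈ D.window τ, v' k = w (k + l))
    (hcyl : ∀ k ∈ Finset.Icc (-(n : ℤ)) n, v k = b k)
    (hoff : ∀ k ∉ D.biasBlock τ, v' k = v k)
    (hsum : ∑ k ∈ D.biasBlock τ, (v' k).toNat = ∑ k ∈ D.biasBlock τ, (v k).toNat + K) :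
    D.IsRaisingReturn τ K n b l w := by
  have hcylWindow := fun k => D.mem_window_of_mem_Icc hτ hn (k := k)
  have hblockWindow : ∀ k ∈ D.biasBlock τ, k ∈ D.window τ := fun k hk =>
    D.mem_window_of_mem_core (D.biasBlock_subset_core τ hk)
  refine ⟨fun k hk => ?_, fun k hk => ?_, fun k hk => ?_, ?_⟩
  · rw [← hv k (hcylWindow k hk), hcyl k hk]
  · rw [shiftT_iterate_apply, ← hv' k (hcylWindow k hk),
      hoff k (Finset.disjoint_left.1 (D.disjoint_Icc_biasBlock hn) hk), hcyl k hk]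
  · obtain ⟨hk, hk'⟩ := Finset.mem_sdiff.1 hk
    have hkWindow := D.mem_window_of_mem_core hk
    rw [shiftT_iterate_apply, ← hv' k hkWindow, hoff k hk', hv k hkWindow]
  · rw [Finset.sum_congr rfl fun k hk => congrArg Bool.toNat (hv' k (hblockWindow k hk)),
      Finset.sum_congr rfl fun k hk => congrArg Bool.toNat (hv k (hblockWindow k hk))] at hsum
    simp only [Ups_eq_sum_toNat, shiftT_iterate_apply, hsum, Nat.cast_add]

theorem mul_measureReal_cylinder_le_exists_isRaisingReturn (hτ : 1 ≤ τ) (hn : n < D.M (τ - 1))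
    (hlam : D.lam τ ≤ 3 / 2) (hK : 4 ≤ K) (hKnn : 8 * K ≤ D.nn τ) (b : Xspace) :
    9 / 10 * (Measure.infinitePi fun k => coin (D.logOdds k)).real
        {w | ∀ k ∈ Finset.Icc (-(n : ℤ)) n, w k = b k} ≤
      (Measure.infinitePi fun k => coin (D.logOdds k)).real
        {w | ∃ i ∈ Finset.Icc 1 (2 ^ (3 * D.N τ - 1)),
          D.IsRaisingReturn τ K n b (i * (2 * D.N τ)) w} := by
  set P := Measure.infinitePi fun k => coin (D.logOdds k)
  set B := {w : Xspace | ∀ k ∈ Finset.Icc (-(n : ℤ)) n, w k = b k}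
  set E := {w : Xspace | (∀ k ∈ Finset.Icc (-(n : ℤ)) n, w k = b k) ∧
    K ≤ ((D.biasBlock τ).filter fun k => w k = false).card}
  have hN : D.N τ = D.M (τ - 1) + D.nn τ := D.N_def τ hτ
  have hcard : (D.biasBlock τ).card = D.nn τ := D.card_biasBlock hτ
  have hE : 19 / 20 * P.real B ≤ P.real E :=
    mul_infinitePi_coin_real_cylinder_le_inter_card_false (D.disjoint_Icc_biasBlock hn) b
      (fun k hk => D.sigmoid_neg_logOdds_ge hτ hlam hk) (by omega) (by omega)
  have hmiss := one_sub_inv_two_pow_pow_le (N := D.N τ) (by omega)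
  have hreturn := one_sub_pow_mul_infinitePi_coin_real_le_exists_window (E := E) (c := -(D.N τ : ℤ))
    (d := 2 * D.N τ) (s := Finset.Icc 1 (2 ^ (3 * D.N τ - 1))) (by simp)
    (fun i hi k hk => D.logOdds_window_add (Finset.mem_Icc.1 hi).1 hk)
    (R := fun v v' => (∀ k ∈ Finset.Icc (-(n : ℤ)) n, v k = b k) ∧
      (∀ k ∉ D.biasBlock τ, v' k = v k) ∧
      ∑ k ∈ D.biasBlock τ, (v' k).toNat = ∑ k ∈ D.biasBlock τ, (v k).toNat + K)
    fun w hw => (exists_sum_toNat_eq_add hw.2).imp fun _ h => ⟨hw.1, h⟩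
  rw [Nat.card_Icc, Nat.add_sub_cancel] at hreturn
  calc 9 / 10 * P.real B
      ≤ 19 / 20 * P.real E := by linarith [measureReal_nonneg (μ := P) (s := B)]
    _ ≤ (1 - (1 - (1 / 2) ^ (2 * D.N τ)) ^ 2 ^ (3 * D.N τ - 1)) * P.real E := by
        gcongr
        linarith
    _ ≤ _ := hreturn
    _ ≤ _ := by
        refine measureReal_mono ?_
        rintro w ⟨i, hi, v, v', hv, hv', hcyl, hoff, hsum⟩
        exact ⟨i, hi, D.isRaisingReturn_of_eqOn_window hτ hn hv hv' hcyl hoff hsum⟩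

theorem two_mul_mem_Icc (hτ : 1 ≤ τ) {i : ℕ} (hi : i ∈ Finset.Icc 1 (2 ^ (3 * D.N τ - 1))) :
    2 * i ∈ Finset.Icc 1 (D.m τ / D.N τ) := by
  have hN := (Nat.zero_le _).trans_lt (D.M_pred_lt_N hτ)
  have hpow : 2 ^ (3 * D.N τ) = 2 * 2 ^ (3 * D.N τ - 1) :=
    (mul_pow_sub_one (by omega) 2).symm
  rw [D.m_def τ hτ, Nat.mul_div_cancel_left _ hN, hpow]
  rw [Finset.mem_Icc] at hi ⊢
  omega

end KosloffData

namespace IsKosloffMeasure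

variable {D : KosloffData} {p : ℤ → ℝ} {P : Measure Xspace} {τ t₀ K n : ℕ}

theorem mul_measure_cylinder_le_exists_isRaisingReturn (hP : IsKosloffMeasure D p P)
    (hτ : 1 ≤ τ) (hn : n < D.M (τ - 1)) (hlam : D.lam τ ≤ 3 / 2) (hK : 4 ≤ K)
    (hKnn : 8 * K ≤ D.nn τ) (b : Xspace) :
    9 / 10 * P {w | ∀ k ∈ Finset.Icc (-(n : ℤ)) n, w k = b k} ≤
      P {w | ∃ l ∈ Finset.Icc 1 (D.m τ / D.N τ), D.IsRaisingReturn τ K n b (l * D.N τ) w} := by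
  have : IsProbabilityMeasure P := hP.1
  have hreal := D.mul_measureReal_cylinder_le_exists_isRaisingReturn hτ hn hlam hK hKnn b
  rw [← hP.eq_infinitePi] at hreal
  calc 9 / 10 * P {w | ∀ k ∈ Finset.Icc (-(n : ℤ)) n, w k = b k}
      = ENNReal.ofReal (9 / 10 * P.real {w | ∀ k ∈ Finset.Icc (-(n : ℤ)) n, w k = b k}) := by
        rw [ENNReal.ofReal_mul (by norm_num), ofReal_measureReal,
          ENNReal.ofReal_div_of_pos (by norm_num), ENNReal.ofReal_ofNat, ENNReal.ofReal_ofNat]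
    _ ≤ _ := ENNReal.ofReal_le_ofReal hreal
    _ = _ := ofReal_measureReal
    _ ≤ _ := by
        refine measure_mono ?_
        rintro w ⟨i, hi, hw⟩
        exact ⟨2 * i, D.two_mul_mem_Icc hτ hi, by rwa [mul_left_comm, ← mul_assoc] at hw⟩

theorem ae_rnD_mem_Icc_of_isRaisingReturn (hP : IsKosloffMeasure D p P) (hτ : 1 ≤ τ) (ht₀ : 1 ≤ t₀)
    (hK : Real.log (D.lam t₀) = K * Real.log (D.lam τ)) {δ : ℝ}
    (hδ : ∀ T, 2 * ∑ t ∈ Finset.Ioc τ T, D.eps t ≤ δ) (b : Xspace) :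
    ∀ᵐ w ∂P, ∀ l ∈ Finset.Icc 1 (D.m τ / D.N τ), D.IsRaisingReturn τ K n b (l * D.N τ) w →
      (rnD P (l * D.N τ) w).toReal ∈
        Set.Icc (Real.exp (-δ) * D.lam t₀) (Real.exp δ * D.lam t₀) := by
  refine (ae_ball_iff (Finset.countable_toSet _)).2 fun l hl => ?_
  obtain ⟨hl1, hlm⟩ := Finset.mem_Icc.1 hl
  have hlN : l * D.N τ ≤ D.m τ := (Nat.mul_le_mul_right _ hlm).trans (Nat.div_mul_le_self _ _)
  filter_upwards [hP.ae_rnD_mem_Icc hτ (Nat.le_mul_of_pos_left _ hl1)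
    (by rw [D.M_def τ hτ]; omega) hδ] with w hw hreturn
  rwa [hreturn.sum_logOdds hτ, ← hK, D.exp_log_lam ht₀] at hw

end IsKosloffMeasure

theorem exists_pos_forall_mem_Icc_exp_mul_abs_sub_le (c : ℝ) {ε : ℝ} (hε : 0 < ε) :
    ∃ δ > 0, ∀ x ∈ Set.Icc (Real.exp (-δ) * c) (Real.exp δ * c), |x - c| ≤ ε := by
  have hcont : Tendsto (fun δ => Real.exp δ * c) (𝓝 0) (𝓝 c) := by
    have h : Continuous fun δ => Real.exp δ * c := by fun_prop
    simpa using h.tendsto 0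
  obtain ⟨r, hr, hball⟩ := Metric.tendsto_nhds_nhds.1 hcont ε hε
  have hhalf : |r| / 2 < r := by rw [abs_of_pos hr]; exact half_lt_self hr
  have hupper := hball (x := r / 2) (by simpa using hhalf)
  have hlower := hball (x := -(r / 2)) (by simpa using hhalf)
  rw [Real.dist_eq, abs_sub_lt_iff] at hupper hlower
  exact ⟨r / 2, half_pos hr, fun x hx =>
    abs_sub_le_iff.2 ⟨by linarith [hx.2], by linarith [hx.1]⟩⟩

end Conclusion

/-- EVC: for every `t₀`, every cylinder `B = [b]_{-n}^n` and every `ε > 0`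
there is `τ` with
`P(⋃_{l=1}^{m_τ/N_τ} (B ∩ T^{-lN_τ}B ∩ {|(T^{lN_τ})' - λ_{t₀}| ≤ ε})) ≥ 0.9 P(B)`. -/
theorem exists_tau_EVC (D : KosloffData) (p : ℤ → ℝ) (P : Measure Xspace)
    (hP : IsKosloffMeasure D p P)
    (t₀ : ℕ) (ht₀ : 1 ≤ t₀) (n : ℕ) (b : Xspace) (ε : ℝ) (hε : 0 < ε) :
    ∃ τ : ℕ,
      (9 / 10 : ENNReal) * P {w : Xspace | ∀ i ∈ Finset.Icc (-(n : ℤ)) (n : ℤ), w i = b i} ≤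
      P (⋃ l ∈ Finset.Icc 1 (D.m τ / D.N τ),
          ({w : Xspace | ∀ i ∈ Finset.Icc (-(n : ℤ)) (n : ℤ), w i = b i} ∩
            shiftT^[l * D.N τ] ⁻¹'
              {w : Xspace | ∀ i ∈ Finset.Icc (-(n : ℤ)) (n : ℤ), w i = b i} ∩
            {w : Xspace | |(rnD P (l * D.N τ) w).toReal - D.lam t₀| ≤ ε})) := by
  obtain ⟨δ, hδ, hclose⟩ := exists_pos_forall_mem_Icc_exp_mul_abs_sub_le (D.lam t₀) hε
  have hlog : 0 < Real.log (D.lam t₀) / 4 := div_pos (D.log_lam_pos ht₀) four_pos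
  obtain ⟨τ, htail, hsmall, hlam, hlarge⟩ :=
    ((D.eventually_forall_two_mul_sum_Ioc_eps_le hδ).and <|
      (D.tendsto_log_lam.eventually_le_const hlog).and <|
      (D.eventually_lam_le (c := 3 / 2) (by norm_num)).and <|
      eventually_gt_atTop (t₀ + n)).exists
  have hτ : 1 ≤ τ := by omega
  obtain ⟨K, hK4, hK⟩ := D.exists_log_lam_eq_mul ht₀ hτ hsmall
  have hn : n < D.M (τ - 1) := lt_of_lt_of_le (by omega) (D.le_M_pred τ)
  have hreturn := hP.mul_measure_cylinder_le_exists_isRaisingReturn hτ hn hlam hK4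
    (D.eight_mul_le_nn ht₀ (by omega) hK) b
  refine ⟨τ, hreturn.trans (measure_mono_ae ?_)⟩
  filter_upwards [hP.ae_rnD_mem_Icc_of_isRaisingReturn hτ ht₀ hK htail b] with w hw
  rintro ⟨l, hl, hret⟩
  exact Set.mem_iUnion₂.2 ⟨l, hl, ⟨hret.mem_cylinder, hret.iterate_mem_cylinder⟩,
    hclose _ (hw l hl hret)⟩
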